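/- A continuous function f : (0,∞) → (0,∞) is operator monotone if and only if f(A ! B) ≤ f(A) # f(B) for every n ∈ ℕ and all n×n positive definite complex matrices A, B. -/

import Mathlib

open Matrix
open scoped ComplexOrder

/-- The Loewner order on matrices: `A ≤ B` iff `B - A` is positive semidefinite. -/
def MLE {n : ℕ} (A B : Matrix (Fin n) (Fin n) ℂ) : Prop := (B - A).PosSemidef

/-- The `t`-weighted harmonic mean `A !_t B = ((1-t)A⁻¹ + tB⁻¹)⁻¹`. -/
noncomputable def wharm {n : ℕ} (t : ℝ) (A B : Matrix (Fin n) (Fin n) ℂ) :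
    Matrix (Fin n) (Fin n) ℂ := ((1 - t) • A⁻¹ + t • B⁻¹)⁻¹

/-- The `t`-weighted arithmetic mean `A ∇_t B = (1-t)A + tB`. -/
noncomputable def warith {n : ℕ} (t : ℝ) (A B : Matrix (Fin n) (Fin n) ℂ) :
    Matrix (Fin n) (Fin n) ℂ := (1 - t) • A + t • B

/-- Real powers of a matrix, via the continuous functional calculus. -/
noncomputable def mpow {n : ℕ} (A : Matrix (Fin n) (Fin n) ℂ) (r : ℝ) :
    Matrix (Fin n) (Fin n) ℂ := cfc (fun x : ℝ => x ^ r) A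

/-- The `t`-weighted geometric mean `A #_t B = A^{1/2} (A^{-1/2} B A^{-1/2})^t A^{1/2}`. -/
noncomputable def wgeom {n : ℕ} (t : ℝ) (A B : Matrix (Fin n) (Fin n) ℂ) :
    Matrix (Fin n) (Fin n) ℂ :=
  mpow A (1/2) * mpow (mpow A (-(1/2)) * B * mpow A (-(1/2))) t * mpow A (1/2)

/-- `f` is operator monotone (increasing): order preserving on positive definite
matrices of every size, via the continuous functional calculus. -/
def OperatorMonotone (f : ℝ → ℝ) : Prop :=
  ∀ (n : ℕ) (A B : Matrix (Fin n) (Fin n) ℂ), A.PosDef → B.PosDef →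
    MLE A B → MLE (cfc f A) (cfc f B)

/-- `f` is operator monotone decreasing: order reversing on positive definite
matrices of every size, via the continuous functional calculus. -/
def OperatorAntitone (f : ℝ → ℝ) : Prop :=
  ∀ (n : ℕ) (A B : Matrix (Fin n) (Fin n) ℂ), A.PosDef → B.PosDef →
    MLE A B → MLE (cfc f B) (cfc f A)

/-!
If `f` is operator monotone, so is `h x = (f x⁻¹)⁻¹`. An operator monotone `h` satisfies Jensen's
inequality `V* h(A) V ≤ h(V* A V)` for isometries `V`, hence is operator concave; applied to `A⁻¹`
and `B⁻¹` and inverted, this reads `f (A ! B) ≤ f A ! f B`, and `! ≤ #`.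

Conversely, `g x = f x⁻¹` satisfies `g (A ∇ B) ≤ g A # g B`. Since `P # Q ≤ (t P + t⁻¹ Q) / 2` for
every `t > 0`, testing this on `2 × 2` matrices bounds `g` on every `[l, ∞)`. For `D ≥ 0` the map
`x ↦ g (A + x D)` is thus midpoint convex and bounded above on `[0, ∞)`, so it decreases: `g` is
operator antitone and `f` is operator monotone.
-/

section LoewnerOrder

open scoped MatrixOrder Matrix.Norms.L2Operator

variable {m k : Type*}

lemma mle_iff_le {n : ℕ} {A B : Matrix (Fin n) (Fin n) ℂ} : MLE A B ↔ A ≤ B := Iff.rfl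

lemma conjTranspose_mul_mul_le_of_le [Fintype m] [Finite k] {A B : Matrix m m ℂ}
    (hAB : A ≤ B) (V : Matrix m k ℂ) : Vᴴ * A * V ≤ Vᴴ * B * V := by
  cases nonempty_fintype k
  rw [Matrix.le_iff, ← Matrix.sub_mul, ← Matrix.mul_sub]
  exact PosSemidef.conjTranspose_mul_mul_same hAB V

lemma posDef_of_posDef_of_le {A B : Matrix m m ℂ} (hA : A.PosDef) (hAB : A ≤ B) : B.PosDef := by
  simpa using hA.add_posSemidef hAB

lemma posDef_conjTranspose_mul_mul_of_isometry [Fintype m] [Finite k] [DecidableEq k]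
    {A : Matrix m m ℂ} (hA : A.PosDef) {V : Matrix m k ℂ} (hV : Vᴴ * V = 1) :
    (Vᴴ * A * V).PosDef := by
  cases nonempty_fintype k
  exact hA.conjTranspose_mul_mul_same <|
    Function.LeftInverse.injective (g := Vᴴ.mulVec) fun x => by
      rw [mulVec_mulVec, hV, one_mulVec]

lemma posDef_mul_mul_of_posDef [Fintype m] {A S : Matrix m m ℂ} (hS : S.PosDef)
    (hA : A.PosDef) : (S * A * S).PosDef := by
  classical
  simpa only [hS.isHermitian.eq] using
    hA.conjTranspose_mul_mul_same (mulVec_injective_of_isUnit hS.isUnit)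

lemma posDef_fromBlocks_zero [Finite m] [Finite k] {A : Matrix m m ℂ} {B : Matrix k k ℂ}
    (hA : A.PosDef) (hB : B.PosDef) : (fromBlocks A 0 0 B).PosDef := by
  classical
  cases nonempty_fintype m
  cases nonempty_fintype k
  have := hA.isUnit.invertible
  have hpos : (fromBlocks A 0 0 B).PosSemidef := by
    simpa using (PosDef.fromBlocks₁₁ (0 : Matrix m k ℂ) B hA).2 (by simpa using hB.posSemidef)
  rw [hpos.posDef_iff_det_ne_zero, det_fromBlocks_zero₂₁]
  exact mul_ne_zero hA.det_pos.ne' hB.det_pos.ne'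

lemma exists_pos_smul_one_le [Finite m] [DecidableEq m] {A : Matrix m m ℂ} (hA : A.PosDef) :
    ∃ l > 0, (l : ℝ) • 1 ≤ A := by
  cases nonempty_fintype m
  cases isEmpty_or_nonempty m
  · exact ⟨1, one_pos, (Subsingleton.elim _ _).le⟩
  · simpa only [Algebra.algebraMap_eq_smul_one] using (CFC.exists_pos_algebraMap_le_iff
      hA.isHermitian.isSelfAdjoint).2 fun x hx => hA.isStrictlyPositive.spectrum_pos hx

variable [Fintype m] [DecidableEq m]

lemma inv_le_inv_of_posDef_of_le {A B : Matrix m m ℂ} (hA : A.PosDef) (hAB : A ≤ B) :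
    B⁻¹ ≤ A⁻¹ := by
  simpa only [nonsing_inv_eq_ringInverse] using
    CStarAlgebra.ringInverse_le_ringInverse hAB hA.isStrictlyPositive

lemma inv_inv_of_posDef {A : Matrix m m ℂ} (hA : A.PosDef) : A⁻¹⁻¹ = A :=
  nonsing_inv_nonsing_inv A ((isUnit_iff_isUnit_det A).1 hA.isUnit)

end LoewnerOrder

section FunctionalCalculus

open scoped MatrixOrder

variable {m k : Type*} [Fintype m] [DecidableEq m] [Fintype k] [DecidableEq k]
variable {f : ℝ → ℝ} {A : Matrix m m ℂ}

lemma continuousOn_real_spectrum (f : ℝ → ℝ) (A : Matrix m m ℂ) :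
    ContinuousOn f (spectrum ℝ A) :=
  A.finite_real_spectrum.continuousOn f

lemma posDef_cfc (hf : Set.MapsTo f (Set.Ioi 0) (Set.Ioi 0)) (hA : A.PosDef) :
    (cfc f A).PosDef :=
  ((cfc_isStrictlyPositive_iff f A (continuousOn_real_spectrum f A) hA.isHermitian).2
    fun _ hx => hf (hA.isStrictlyPositive.spectrum_pos hx)).posDef

lemma cfc_inv_eq_cfc_comp_inv (f : ℝ → ℝ) (hA : A.PosDef) :
    cfc f A⁻¹ = cfc (fun x => f x⁻¹) A := by
  rw [nonsing_inv_eq_ringInverse, ← cfc_ringInverse_id (R := ℝ) A hA.isUnit hA.isHermitian]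
  exact (cfc_comp' f (·⁻¹) A ((A.finite_real_spectrum.image _).continuousOn f)
    (continuousOn_real_spectrum _ A) hA.isHermitian).symm

lemma inv_cfc (hf : Set.MapsTo f (Set.Ioi 0) (Set.Ioi 0)) (hA : A.PosDef) :
    (cfc f A)⁻¹ = cfc (fun x => (f x)⁻¹) A := by
  rw [nonsing_inv_eq_ringInverse]
  exact (cfc_inv f A (fun x hx => (hf (hA.isStrictlyPositive.spectrum_pos hx)).ne')
    (continuousOn_real_spectrum f A) hA.isHermitian).symm

lemma inv_cfc_inv (hf : Set.MapsTo f (Set.Ioi 0) (Set.Ioi 0)) (hA : A.PosDef) :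
    (cfc f A⁻¹)⁻¹ = cfc (fun x => (f x⁻¹)⁻¹) A := by
  rw [inv_cfc hf hA.inv, cfc_inv_eq_cfc_comp_inv _ hA]

lemma cfc_const_add_const_mul_id (a b : ℝ) (hA : IsSelfAdjoint A) :
    cfc (fun x : ℝ => a + b * x) A = a • 1 + b • A := by
  rw [cfc_const_add a (b * ·) A (by fun_prop) hA, cfc_const_mul_id b A hA,
    Algebra.algebraMap_eq_smul_one]

lemma aeval_mul_eq_mul_aeval {X : Matrix m m ℂ} {Y : Matrix k k ℂ} {K : Matrix k m ℂ}
    (hK : Y * K = K * X) (p : Polynomial ℝ) :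
    Polynomial.aeval Y p * K = K * Polynomial.aeval X p := by
  induction p using Polynomial.induction_on' with
  | add p q hp hq => simp only [map_add, Matrix.add_mul, Matrix.mul_add, hp, hq]
  | monomial n a =>
    have hpow : Y ^ n * K = K * X ^ n := by
      induction n with
      | zero => simp
      | succ n ih =>
        rw [pow_succ, Matrix.mul_assoc, hK, ← Matrix.mul_assoc, ih, Matrix.mul_assoc, ← pow_succ]
    simp only [Polynomial.aeval_monomial, Algebra.algebraMap_eq_smul_one, smul_mul_assoc, one_mul]
    rw [Matrix.smul_mul, hpow, Matrix.mul_smul]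

lemma cfc_mul_eq_mul_cfc (f : ℝ → ℝ) {X : Matrix m m ℂ} {Y : Matrix k k ℂ} (hX : X.IsHermitian)
    (hY : Y.IsHermitian) {K : Matrix k m ℂ} (hK : Y * K = K * X) :
    cfc f Y * K = K * cfc f X := by
  have hfin := X.finite_real_spectrum.union Y.finite_real_spectrum
  set p := Lagrange.interpolate hfin.toFinset id f
  have hp : ∀ x ∈ spectrum ℝ X ∪ spectrum ℝ Y, f x = p.eval x := fun x hx =>
    (Lagrange.eval_interpolate_at_node f Function.injective_id.injOn (by simpa using hx)).symm
  have hpX : cfc f X = Polynomial.aeval X p :=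
    (cfc_congr fun x hx => hp x (.inl hx)).trans (cfc_polynomial p X hX.isSelfAdjoint)
  have hpY : cfc f Y = Polynomial.aeval Y p :=
    (cfc_congr fun x hx => hp x (.inr hx)).trans (cfc_polynomial p Y hY.isSelfAdjoint)
  rw [hpX, hpY, aeval_mul_eq_mul_aeval hK p]

lemma cfc_submatrix_equiv (f : ℝ → ℝ) (hA : A.IsHermitian) (e : k ≃ m) :
    cfc f (A.submatrix e e) = (cfc f A).submatrix e e := by
  have hleft (M : Matrix k k ℂ) :
      M * (1 : Matrix m m ℂ).submatrix e id = M.submatrix id e.symm := mul_submatrix_one e id M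
  have hright (M : Matrix m m ℂ) :
      (1 : Matrix m m ℂ).submatrix e id * M = M.submatrix e id := one_submatrix_mul e (.refl m) M
  have h := cfc_mul_eq_mul_cfc f hA (hA.submatrix e) (K := (1 : Matrix m m ℂ).submatrix e id)
    (by simp [hleft, hright])
  rw [hleft, hright] at h
  simpa using congrArg (·.submatrix id e) h

lemma cfc_fromBlocks_zero (f : ℝ → ℝ) {B : Matrix k k ℂ} (hA : A.IsHermitian)
    (hB : B.IsHermitian) :
    cfc f (fromBlocks A 0 0 B) = fromBlocks (cfc f A) 0 0 (cfc f B) := by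
  have hAB : (fromBlocks A 0 0 B).IsHermitian := hA.fromBlocks (by simp) hB
  have hl := cfc_mul_eq_mul_cfc f hA hAB (K := fromRows 1 0)
    (by simp [fromBlocks_mul_fromRows, fromRows_mul])
  have hr := cfc_mul_eq_mul_cfc f hB hAB (K := fromRows 0 1)
    (by simp [fromBlocks_mul_fromRows, fromRows_mul])
  rw [← fromBlocks_toBlocks (cfc f (fromBlocks A 0 0 B))] at hl hr ⊢
  simp only [fromBlocks_mul_fromRows, fromRows_mul, Matrix.mul_one, Matrix.mul_zero,
    Matrix.one_mul, Matrix.zero_mul, add_zero, zero_add] at hl hr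
  rw [(fromRows_inj hl).1, (fromRows_inj hl).2, (fromRows_inj hr).1, (fromRows_inj hr).2]

end FunctionalCalculus

section Jensen

open scoped MatrixOrder Matrix.Norms.L2Operator

variable {m k : Type*}

-- The correction `ε⁻¹ W W*` makes the range of `V` invariant under `L`.
lemma exists_ge_intertwines_compression_add_smul_one [Fintype m] [Fintype k] [DecidableEq k]
    {A : Matrix m m ℂ} (hA : A.IsHermitian) {V : Matrix m k ℂ} (hV : Vᴴ * V = 1) {ε : ℝ}
    (hε : 0 < ε) :
    ∃ L, A ≤ L ∧ L * V = V * (Vᴴ * A * V + ε • 1) := by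
  set W := V * (Vᴴ * A * V + ε • 1) - A * V with hW
  have hWV : Wᴴ * V = ε • 1 := by
    simp [hW, hA.eq, Matrix.sub_mul, Matrix.mul_assoc, hV]
  refine ⟨A + ε⁻¹ • (W * Wᴴ), ?_, ?_⟩
  · exact le_add_of_nonneg_right
      (smul_nonneg (inv_nonneg.2 hε.le) (posSemidef_self_mul_conjTranspose W).nonneg)
  · rw [Matrix.add_mul, Matrix.smul_mul, Matrix.mul_assoc, hWV, Matrix.mul_smul, Matrix.mul_one,
      inv_smul_smul₀ hε.ne', hW, add_sub_cancel]

variable [Fintype m] [DecidableEq m] [Fintype k] [DecidableEq k]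
variable {h : ℝ → ℝ} {A B : Matrix m m ℂ}

lemma OperatorMonotone.cfc_le_cfc (hh : OperatorMonotone h) (hA : A.PosDef) (hAB : A ≤ B) :
    cfc h A ≤ cfc h B := by
  have hB : B.PosDef := posDef_of_posDef_of_le hA hAB
  let e : Fin (Fintype.card m) ≃ m := (Fintype.equivFin m).symm
  have hfin := hh _ (A.submatrix e e) (B.submatrix e e) (hA.submatrix e.injective)
    (hB.submatrix e.injective) ((posSemidef_submatrix_equiv e).2 hAB)
  rw [cfc_submatrix_equiv h hA.isHermitian, cfc_submatrix_equiv h hB.isHermitian] at hfin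
  exact (posSemidef_submatrix_equiv e).1 hfin

lemma tendsto_cfc_add_smul_one (hh : ContinuousOn h (Set.Ioi 0)) (hA : A.PosDef) :
    Filter.Tendsto (fun ε : ℝ => cfc h (A + ε • 1)) (nhdsWithin 0 (Set.Ioi 0))
      (nhds (cfc h A)) := by
  have hpos : ∀ ε ∈ Set.Ici (0 : ℝ), (A + ε • 1).PosDef := fun ε hε =>
    hA.add_posSemidef (PosSemidef.one.smul hε)
  have hcont : ContinuousOn (fun ε : ℝ => cfc h (A + ε • 1)) (Set.Ici 0) := by
    refine ContinuousOn.cfc_of_mem_nhdsSet (s := Set.Ioi 0) h ?_ (by fun_prop)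
      (fun ε hε => (hpos ε hε).isHermitian) hh
    refine isOpen_Ioi.mem_nhdsSet.2 (Set.iUnion₂_subset fun ε hε x hx => ?_)
    exact (hpos ε hε).isStrictlyPositive.spectrum_pos hx
  have := (hcont 0 Set.self_mem_Ici).mono_left (nhdsWithin_mono _ Set.Ioi_subset_Ici_self)
  simpa using this

theorem OperatorMonotone.conjTranspose_mul_cfc_mul_le (hh : OperatorMonotone h)
    (hc : ContinuousOn h (Set.Ioi 0)) (hA : A.PosDef) {V : Matrix m k ℂ} (hV : Vᴴ * V = 1) :
    Vᴴ * cfc h A * V ≤ cfc h (Vᴴ * A * V) := by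
  have hC := posDef_conjTranspose_mul_mul_of_isometry hA hV
  refine ge_of_tendsto (tendsto_cfc_add_smul_one hc hC) ?_
  filter_upwards [self_mem_nhdsWithin] with ε hε
  obtain ⟨L, hAL, hLV⟩ := exists_ge_intertwines_compression_add_smul_one hA.isHermitian hV hε
  have hL : L.PosDef := posDef_of_posDef_of_le hA hAL
  have hCε : (Vᴴ * A * V + ε • 1).PosDef := hC.add_posSemidef (PosSemidef.one.smul (le_of_lt hε))
  calc Vᴴ * cfc h A * V
      ≤ Vᴴ * cfc h L * V := conjTranspose_mul_mul_le_of_le (hh.cfc_le_cfc hA hAL) V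
    _ = Vᴴ * V * cfc h (Vᴴ * A * V + ε • 1) := by
        rw [Matrix.mul_assoc Vᴴ, cfc_mul_eq_mul_cfc h hCε.isHermitian hL.isHermitian hLV,
          ← Matrix.mul_assoc]
    _ = cfc h (Vᴴ * A * V + ε • 1) := by rw [hV, Matrix.one_mul]

theorem OperatorMonotone.warith_cfc_le {n : ℕ} {A B : Matrix (Fin n) (Fin n) ℂ} {t : ℝ}
    (hh : OperatorMonotone h) (hc : ContinuousOn h (Set.Ioi 0)) (hA : A.PosDef) (hB : B.PosDef)
    (ht : t ∈ Set.Icc 0 1) : warith t (cfc h A) (cfc h B) ≤ cfc h (warith t A B) := by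
  set V : Matrix (Fin n ⊕ Fin n) (Fin n) ℂ := fromRows (√(1 - t) • 1) (√t • 1) with hV
  have hcompress (X Y : Matrix (Fin n) (Fin n) ℂ) :
      Vᴴ * fromBlocks X 0 0 Y * V = warith t X Y := by
    rw [hV, Matrix.mul_assoc, fromBlocks_mul_fromRows,
      conjTranspose_fromRows_eq_fromCols_conjTranspose, fromCols_mul_fromRows]
    simp [warith, smul_smul, Real.mul_self_sqrt ht.1, Real.mul_self_sqrt (sub_nonneg.2 ht.2)]
  have hiso : Vᴴ * V = 1 := by
    simpa [warith, ← add_smul] using hcompress 1 1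
  simpa only [hcompress, cfc_fromBlocks_zero h hA.isHermitian hB.isHermitian] using
    hh.conjTranspose_mul_cfc_mul_le hc (posDef_fromBlocks_zero hA hB) hiso

end Jensen

section HarmonicMean

open scoped MatrixOrder

variable {f : ℝ → ℝ} {n : ℕ} {A B : Matrix (Fin n) (Fin n) ℂ} {t : ℝ}

lemma posDef_warith (hA : A.PosDef) (hB : B.PosDef) (ht : t ∈ Set.Icc 0 1) :
    (warith t A B).PosDef := by
  rcases ht.1.eq_or_lt with rfl | ht0
  · simpa [warith] using hA
  · exact .posSemidef_add (hA.posSemidef.smul (sub_nonneg.2 ht.2)) (hB.smul ht0)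

lemma wharm_eq_inv_warith_inv (t : ℝ) (A B : Matrix (Fin n) (Fin n) ℂ) :
    wharm t A B = (warith t A⁻¹ B⁻¹)⁻¹ := rfl

lemma OperatorMonotone.inv_comp_inv (hf : OperatorMonotone f)
    (hpos : Set.MapsTo f (Set.Ioi 0) (Set.Ioi 0)) :
    OperatorMonotone (fun x => (f x⁻¹)⁻¹) := by
  intro n A B hA hB hAB
  rw [mle_iff_le, ← inv_cfc_inv hpos hA, ← inv_cfc_inv hpos hB]
  exact inv_le_inv_of_posDef_of_le (posDef_cfc hpos hB.inv)
    (hf n _ _ hB.inv hA.inv (inv_le_inv_of_posDef_of_le hA hAB))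

lemma continuousOn_comp_inv (hf : ContinuousOn f (Set.Ioi 0)) :
    ContinuousOn (fun x => f x⁻¹) (Set.Ioi 0) :=
  hf.comp (continuousOn_inv₀.mono fun _ hx => ne_of_gt hx) fun _ hx => Set.mem_Ioi.2 (inv_pos.2 hx)

theorem OperatorMonotone.cfc_wharm_le (hf : OperatorMonotone f)
    (hc : ContinuousOn f (Set.Ioi 0)) (hpos : Set.MapsTo f (Set.Ioi 0) (Set.Ioi 0))
    (hA : A.PosDef) (hB : B.PosDef) (ht : t ∈ Set.Icc 0 1) :
    cfc f (wharm t A B) ≤ wharm t (cfc f A) (cfc f B) := by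
  have hM : (warith t A⁻¹ B⁻¹).PosDef := posDef_warith hA.inv hB.inv ht
  have hconcave : warith t (cfc f A)⁻¹ (cfc f B)⁻¹ ≤ (cfc f (warith t A⁻¹ B⁻¹)⁻¹)⁻¹ := by
    have := (hf.inv_comp_inv hpos).warith_cfc_le
      ((continuousOn_comp_inv hc).inv₀ fun x hx => (hpos (Set.mem_Ioi.2 (inv_pos.2 hx))).ne')
      hA.inv hB.inv ht
    rwa [← inv_cfc_inv hpos hA.inv, ← inv_cfc_inv hpos hB.inv, ← inv_cfc_inv hpos hM,
      inv_inv_of_posDef hA, inv_inv_of_posDef hB] at this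
  have hinv := inv_le_inv_of_posDef_of_le
    (posDef_warith (posDef_cfc hpos hA).inv (posDef_cfc hpos hB).inv ht) hconcave
  rwa [inv_inv_of_posDef (posDef_cfc hpos hM.inv)] at hinv

end HarmonicMean

section GeometricMean

open scoped MatrixOrder

variable {n : ℕ} {P Q : Matrix (Fin n) (Fin n) ℂ} {t : ℝ}

lemma posDef_mpow (hP : P.PosDef) (r : ℝ) : (mpow P r).PosDef :=
  posDef_cfc (fun _ hx => Real.rpow_pos_of_pos hx r) hP

lemma mpow_mul_mpow (hP : P.PosDef) (r s : ℝ) : mpow P r * mpow P s = mpow P (r + s) := by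
  rw [mpow, mpow, mpow, ← cfc_mul _ _ P (continuousOn_real_spectrum _ P)
    (continuousOn_real_spectrum _ P)]
  exact cfc_congr fun x hx => (Real.rpow_add (hP.isStrictlyPositive.spectrum_pos hx) r s).symm

lemma mpow_zero (hP : P.PosDef) : mpow P 0 = 1 := by
  simp only [mpow, Real.rpow_zero, cfc_const_one ℝ P hP.isHermitian.isSelfAdjoint]

lemma mpow_one (hP : P.PosDef) : mpow P 1 = P := by
  simp only [mpow, Real.rpow_one, cfc_id' ℝ P hP.isHermitian.isSelfAdjoint]

lemma inv_mpow (hP : P.PosDef) (r : ℝ) : (mpow P r)⁻¹ = mpow P (-r) :=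
  inv_eq_left_inv (by rw [mpow_mul_mpow hP, neg_add_cancel, mpow_zero hP])

lemma mpow_inv (hP : P.PosDef) (r : ℝ) : mpow P⁻¹ r = mpow P (-r) := by
  rw [mpow, cfc_inv_eq_cfc_comp_inv _ hP, mpow]
  refine cfc_congr fun x hx => ?_
  have hx0 := hP.isStrictlyPositive.spectrum_pos hx
  simp only [Real.rpow_neg hx0.le, Real.inv_rpow hx0.le]

lemma mpow_le_smul_one_add_smul (hP : P.PosDef) {a b : ℝ}
    (h : ∀ x, 0 < x → x ^ t ≤ a + b * x) : mpow P t ≤ a • 1 + b • P := by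
  rw [← cfc_const_add_const_mul_id a b hP.isHermitian.isSelfAdjoint]
  exact cfc_mono (fun x hx => h x (hP.isStrictlyPositive.spectrum_pos hx))
    (continuousOn_real_spectrum _ P) (continuousOn_real_spectrum _ P)

lemma wgeom_le_smul_add_smul (hP : P.PosDef) (hQ : Q.PosDef) {a b : ℝ}
    (h : ∀ x, 0 < x → x ^ t ≤ a + b * x) : wgeom t P Q ≤ a • P + b • Q := by
  set R := mpow P (1/2)
  set S := mpow P (-(1/2))
  have hRR : R * R = P := by rw [mpow_mul_mpow hP, add_halves, mpow_one hP]
  have hRS : R * S = 1 := by rw [mpow_mul_mpow hP, add_neg_cancel, mpow_zero hP]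
  have hSR : S * R = 1 := by rw [mpow_mul_mpow hP, neg_add_cancel, mpow_zero hP]
  have hRQR : R * (S * Q * S) * R = Q := by
    simp only [Matrix.mul_assoc, hSR, Matrix.mul_one]
    rw [← Matrix.mul_assoc, hRS, Matrix.one_mul]
  have hSQS : (S * Q * S).PosDef := posDef_mul_mul_of_posDef (posDef_mpow hP _) hQ
  have hle := conjTranspose_mul_mul_le_of_le (mpow_le_smul_one_add_smul hSQS h) R
  rw [(posDef_mpow hP (1/2)).isHermitian.eq] at hle
  calc wgeom t P Q ≤ R * (a • 1 + b • (S * Q * S)) * R := hle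
    _ = a • P + b • Q := by
      simp only [Matrix.mul_add, Matrix.add_mul, Matrix.mul_smul, Matrix.smul_mul, Matrix.mul_one,
        hRR, hRQR]

lemma posDef_wgeom (hP : P.PosDef) (hQ : Q.PosDef) (t : ℝ) : (wgeom t P Q).PosDef :=
  posDef_mul_mul_of_posDef (posDef_mpow hP _)
    (posDef_mpow (posDef_mul_mul_of_posDef (posDef_mpow hP _) hQ) t)

lemma inv_wgeom (hP : P.PosDef) (hQ : Q.PosDef) (t : ℝ) :
    (wgeom t P Q)⁻¹ = wgeom t P⁻¹ Q⁻¹ := by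
  have hX := posDef_mul_mul_of_posDef (posDef_mpow hP (-(1/2))) hQ
  rw [wgeom, Matrix.mul_inv_rev, Matrix.mul_inv_rev, inv_mpow hX, ← mpow_inv hX]
  simp only [wgeom, Matrix.mul_inv_rev, inv_mpow hP, mpow_inv hP, neg_neg, Matrix.mul_assoc]

lemma wgeom_le_warith (hP : P.PosDef) (hQ : Q.PosDef) (ht : t ∈ Set.Icc 0 1) :
    wgeom t P Q ≤ warith t P Q :=
  wgeom_le_smul_add_smul hP hQ fun x hx => by
    simpa using Real.geom_mean_le_arith_mean2_weighted (sub_nonneg.2 ht.2) ht.1 zero_le_one hx.le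
      (sub_add_cancel 1 t)

theorem wharm_le_wgeom (hP : P.PosDef) (hQ : Q.PosDef) (ht : t ∈ Set.Icc 0 1) :
    wharm t P Q ≤ wgeom t P Q := by
  have hle := inv_le_inv_of_posDef_of_le (posDef_wgeom hP.inv hQ.inv t)
    (wgeom_le_warith hP.inv hQ.inv ht)
  rwa [inv_wgeom hP.inv hQ.inv, inv_inv_of_posDef hP, inv_inv_of_posDef hQ] at hle

theorem OperatorMonotone.cfc_wharm_le_wgeom {f : ℝ → ℝ} {A B : Matrix (Fin n) (Fin n) ℂ}
    (hf : OperatorMonotone f) (hc : ContinuousOn f (Set.Ioi 0))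
    (hpos : Set.MapsTo f (Set.Ioi 0) (Set.Ioi 0)) (hA : A.PosDef) (hB : B.PosDef)
    (ht : t ∈ Set.Icc 0 1) : cfc f (wharm t A B) ≤ wgeom t (cfc f A) (cfc f B) :=
  (hf.cfc_wharm_le hc hpos hA hB ht).trans
    (wharm_le_wgeom (posDef_cfc hpos hA) (posDef_cfc hpos hB) ht)

lemma wgeom_half_le_smul_add_smul (hP : P.PosDef) (hQ : Q.PosDef) (ht : 0 < t) :
    wgeom 2⁻¹ P Q ≤ (t / 2) • P + (t⁻¹ / 2) • Q :=
  wgeom_le_smul_add_smul hP hQ fun x hx => by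
    have hamgm := Real.geom_mean_le_arith_mean2_weighted (by norm_num : (0:ℝ) ≤ 2⁻¹)
      (by norm_num : (0:ℝ) ≤ 2⁻¹) ht.le (by positivity : 0 ≤ t⁻¹ * x) (by norm_num)
    rw [← Real.mul_rpow ht.le (by positivity), mul_inv_cancel_left₀ ht.ne'] at hamgm
    linarith

end GeometricMean

/-- Operator log-convexity in the sense of Ando and Hiai, `g (A ∇ B) ≤ g A # g B`: this is what
the inequality `f (A ! B) ≤ f A # f B` says about `g x = f x⁻¹`. -/
def OperatorLogConvex (g : ℝ → ℝ) : Prop :=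
  ∀ (n : ℕ) (A B : Matrix (Fin n) (Fin n) ℂ), A.PosDef → B.PosDef →
    MLE (cfc g (warith 2⁻¹ A B)) (wgeom 2⁻¹ (cfc g A) (cfc g B))

/-- The matrix `v vᵀ` for `v = (c, s)`. When `c ^ 2 + s ^ 2 = 1` it is the orthogonal projection
onto the line through `v`. -/
def lineProj (c s : ℝ) : Matrix (Fin 2) (Fin 2) ℂ :=
  !![(c ^ 2 : ℂ), c * s; c * s, (s ^ 2 : ℂ)]

section LogConvexScalarBound

open scoped MatrixOrder

variable {m : Type*} [Fintype m] [DecidableEq m] {g : ℝ → ℝ}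

lemma isStarProjection_lineProj {c s : ℝ} (h : c ^ 2 + s ^ 2 = 1) :
    IsStarProjection (lineProj c s) := by
  have hsq : lineProj c s * lineProj c s = (c ^ 2 + s ^ 2) • lineProj c s := by
    ext i j
    fin_cases i <;> fin_cases j <;> simp [lineProj, Matrix.mul_apply] <;> ring
  constructor
  · rw [IsIdempotentElem, hsq, h, one_smul]
  · ext i j
    fin_cases i <;> fin_cases j <;> simp [lineProj]

lemma lineProj_double_angle_add_lineProj (c s : ℝ) :
    lineProj (c ^ 2 - s ^ 2) (2 * c * s) + lineProj (c ^ 2 + s ^ 2) 0 =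
      (2 * s ^ 2 * (c ^ 2 + s ^ 2)) • 1 + (2 * (c ^ 2 - s ^ 2)) • lineProj c s := by
  ext i j
  fin_cases i <;> fin_cases j <;> simp [lineProj] <;> ring

lemma cfc_smul_one_add_smul_of_isStarProjection (g : ℝ → ℝ) (l T : ℝ) {P : Matrix m m ℂ}
    (hP : IsStarProjection P) :
    cfc g (l • 1 + T • P) = g l • 1 + (g (l + T) - g l) • P := by
  have hspec : spectrum ℝ P ⊆ {0, 1} :=
    (isStarProjection_iff_spectrum_subset_and_isSelfAdjoint.1 hP).1
  rw [← cfc_const_add_const_mul_id _ _ hP.isSelfAdjoint,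
    ← cfc_const_add_const_mul_id _ _ hP.isSelfAdjoint, ← cfc_comp' g (fun x => l + T * x) P
    ((P.finite_real_spectrum.image _).continuousOn g) (by fun_prop) hP.isSelfAdjoint]
  refine cfc_congr fun x hx => ?_
  rcases hspec hx with rfl | rfl <;> simp

lemma posDef_smul_one_add_smul_of_isStarProjection {l T : ℝ} (hl : 0 < l) (hT : 0 ≤ T)
    {P : Matrix m m ℂ} (hP : IsStarProjection P) : (l • 1 + T • P).PosDef :=
  (PosDef.one.smul hl).add_posSemidef (hP.nonneg.posSemidef.smul hT)

lemma OperatorLogConvex.cfc_warith_le (hg : OperatorLogConvex g)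
    (hpos : Set.MapsTo g (Set.Ioi 0) (Set.Ioi 0)) {n : ℕ} {A B : Matrix (Fin n) (Fin n) ℂ}
    (hA : A.PosDef) (hB : B.PosDef) {t : ℝ} (ht : 0 < t) :
    cfc g (warith 2⁻¹ A B) ≤ (t / 2) • cfc g A + (t⁻¹ / 2) • cfc g B :=
  (mle_iff_le.1 (hg n A B hA hB)).trans
    (wgeom_half_le_smul_add_smul (posDef_cfc hpos hA) (posDef_cfc hpos hB) ht)

lemma warith_half_lineProj {c s : ℝ} (h : c ^ 2 + s ^ 2 = 1) (l T : ℝ) :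
    warith 2⁻¹ (l • 1 + T • lineProj (c ^ 2 - s ^ 2) (2 * c * s)) (l • 1 + T • lineProj 1 0) =
      (l + T * s ^ 2) • 1 + (T * (c ^ 2 - s ^ 2)) • lineProj c s := by
  have hsum := lineProj_double_angle_add_lineProj c s
  rw [h, mul_one] at hsum
  calc _ = l • 1 + (T / 2) • (lineProj (c ^ 2 - s ^ 2) (2 * c * s) + lineProj 1 0) := by
        rw [warith]; module
    _ = _ := by rw [hsum]; module

-- The lower right entry of `cfc_warith_le` for the matrices of `warith_half_lineProj`: it vanishes
-- for `lineProj 1 0`, so that `g (l + T)` occurs only with the factor `t`.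
lemma OperatorLogConvex.sq_mul_add_sq_mul_le (hg : OperatorLogConvex g)
    (hpos : Set.MapsTo g (Set.Ioi 0) (Set.Ioi 0)) {c s l T t : ℝ} (hcs : c ^ 2 + s ^ 2 = 1)
    (hl : 0 < l) (hT : 0 ≤ T) (ht : 0 < t) :
    c ^ 2 * g (l + s ^ 2 * T) + s ^ 2 * g (l + c ^ 2 * T) ≤
      t / 2 * (g l + (2 * c * s) ^ 2 * (g (l + T) - g l)) + t⁻¹ / 2 * g l := by
  have hP := isStarProjection_lineProj hcs
  have hP₂ : IsStarProjection (lineProj (c ^ 2 - s ^ 2) (2 * c * s)) :=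
    isStarProjection_lineProj (by linear_combination (c ^ 2 + s ^ 2 + 1) * hcs)
  have hP₀ : IsStarProjection (lineProj 1 0) := isStarProjection_lineProj (by norm_num)
  have hle := hg.cfc_warith_le hpos (posDef_smul_one_add_smul_of_isStarProjection hl hT hP₂)
    (posDef_smul_one_add_smul_of_isStarProjection hl hT hP₀) ht
  rw [warith_half_lineProj hcs, cfc_smul_one_add_smul_of_isStarProjection g _ _ hP,
    cfc_smul_one_add_smul_of_isStarProjection g _ _ hP₂,
    cfc_smul_one_add_smul_of_isStarProjection g _ _ hP₀,
    show l + T * s ^ 2 + T * (c ^ 2 - s ^ 2) = l + c ^ 2 * T by ring, mul_comm T] at hle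
  have hentry : g (l + s ^ 2 * T) + (g (l + c ^ 2 * T) - g (l + s ^ 2 * T)) * s ^ 2 ≤
      t / 2 * g l + t / 2 * ((g (l + T) - g l) * (2 * c * s) ^ 2) + t⁻¹ / 2 * g l := by
    rw [← Complex.real_le_real]
    simpa [lineProj] using PosSemidef.diag_nonneg hle (i := 1)
  linear_combination hentry + g (l + s ^ 2 * T) * hcs

lemma OperatorLogConvex.one_sub_mul_le (hg : OperatorLogConvex g)
    (hpos : Set.MapsTo g (Set.Ioi 0) (Set.Ioi 0)) {l T r t : ℝ} (hl : 0 < l) (hT : 0 ≤ T)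
    (hr : r ∈ Set.Icc 0 1) (ht : 0 < t) :
    (1 - r) * g (l + r * T) ≤ t / 2 * (g l + g (l + T)) + t⁻¹ / 2 * g l := by
  obtain ⟨hr0, hr1⟩ := hr
  have hr1' : 0 ≤ 1 - r := sub_nonneg.2 hr1
  have hle := hg.sq_mul_add_sq_mul_le hpos (c := √r) (s := √(1 - r))
    (by rw [Real.sq_sqrt hr0, Real.sq_sqrt hr1', add_sub_cancel]) hl hT ht
  rw [mul_pow, mul_pow, Real.sq_sqrt hr0, Real.sq_sqrt hr1'] at hle
  have hgl : 0 < g l := hpos hl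
  have hgT : 0 < g (l + T) := hpos (add_pos_of_pos_of_nonneg hl hT)
  have hnonneg : 0 ≤ r * g (l + (1 - r) * T) :=
    mul_nonneg hr0 (hpos (add_pos_of_pos_of_nonneg hl (mul_nonneg hr1' hT))).le
  have hweights : 2 ^ 2 * r * (1 - r) * (g (l + T) - g l) ≤ g (l + T) := by
    nlinarith [mul_nonneg (mul_nonneg hr0 hr1') hgl.le, mul_nonneg hgT.le (sq_nonneg (1 - 2 * r))]
  linarith [mul_le_mul_of_nonneg_left hweights (half_pos ht).le]

end LogConvexScalarBound

section Boundedness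

variable {φ : ℝ → ℝ}

lemma sq_mul_le_of_le_four_mul {a b c q : ℝ} (hq : 0 < q) (hab : a ≤ b) (hcb : c ≤ 4 * b)
    (h : q * b ≤ q / 5 / 2 * (a + c) + (q / 5)⁻¹ / 2 * a) : q ^ 2 * b ≤ 5 * a := by
  have hmul := mul_le_mul_of_nonneg_left h hq.le
  have hinv : q * ((q / 5)⁻¹ / 2 * a) = 5 / 2 * a := by field_simp
  nlinarith [mul_le_mul_of_nonneg_left (add_le_add hab hcb) (sq_nonneg q)]

-- At a maximiser `z` of `φ T * (L - T) ^ 2` the doubling bound `φ ((z + L) / 2) ≤ 4 * φ z` holds.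
-- With `r = z / y`, `y = (z + L) / 2`, the weight `t = (1 - r) / 5` then absorbs `φ y` into the
-- left-hand side of `h`.
lemma mul_sq_le_of_isMaxOn (hpos : ∀ T, 0 ≤ T → 0 < φ T)
    (h : ∀ T r t, 0 ≤ T → r ∈ Set.Icc (0 : ℝ) 1 → 0 < t →
      (1 - r) * φ (r * T) ≤ t / 2 * (φ 0 + φ T) + t⁻¹ / 2 * φ 0)
    {L z : ℝ} (hz : z ∈ Set.Icc 0 L)
    (hmax : IsMaxOn (fun T => φ T * (L - T) ^ 2) (Set.Icc 0 L) z) :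
    φ z * (L - z) ^ 2 ≤ 20 * L ^ 2 * φ 0 := by
  obtain ⟨hz0, hzL⟩ := hz
  have hφ0 : 0 < φ 0 := hpos 0 le_rfl
  rcases le_or_gt (φ z) (φ 0) with hle | hlt
  · nlinarith [mul_le_mul hle (pow_le_pow_left₀ (sub_nonneg.2 hzL) (sub_le_self L hz0) 2)
      (sq_nonneg _) hφ0.le, mul_nonneg hφ0.le (sq_nonneg L)]
  rcases hzL.eq_or_lt with rfl | hzL
  · rw [sub_self, zero_pow two_ne_zero, mul_zero]
    positivity
  set y := (z + L) / 2 with hy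
  have hy0 : 0 < y := by linarith
  have hdouble : φ y ≤ 4 * φ z := by
    have hψ : φ y * (L - y) ^ 2 ≤ φ z * (L - z) ^ 2 := hmax ⟨hy0.le, by linarith⟩
    have hhalf : L - y = (L - z) / 2 := by rw [hy]; ring
    rw [hhalf] at hψ
    nlinarith [sq_pos_of_pos (sub_pos.2 hzL)]
  have hrz : z / y * y = z := div_mul_cancel₀ z hy0.ne'
  have hr1 : z / y < 1 := (div_lt_one hy0).2 (by linarith)
  have hstep := h y (z / y) ((1 - z / y) / 5) hy0.le ⟨by positivity, hr1.le⟩ (by linarith)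
  rw [hrz] at hstep
  have hbound := sq_mul_le_of_le_four_mul (sub_pos.2 hr1) hlt.le hdouble hstep
  have hgap : L - z ≤ 2 * L * (1 - z / y) := by
    have : L - z = 2 * y * (1 - z / y) := by field_simp; linarith
    rw [this]
    gcongr
    linarith
  calc φ z * (L - z) ^ 2 ≤ φ z * (2 * L * (1 - z / y)) ^ 2 := by
        gcongr
        exact (hpos z hz0).le
    _ = 4 * L ^ 2 * ((1 - z / y) ^ 2 * φ z) := by ring
    _ ≤ 4 * L ^ 2 * (5 * φ 0) := by gcongr
    _ = 20 * L ^ 2 * φ 0 := by ring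

lemma le_mul_apply_zero (hc : ContinuousOn φ (Set.Ici 0)) (hpos : ∀ T, 0 ≤ T → 0 < φ T)
    (h : ∀ T r t, 0 ≤ T → r ∈ Set.Icc (0 : ℝ) 1 → 0 < t →
      (1 - r) * φ (r * T) ≤ t / 2 * (φ 0 + φ T) + t⁻¹ / 2 * φ 0) {x : ℝ} (hx : 0 ≤ x) :
    φ x ≤ 80 * φ 0 := by
  rcases hx.eq_or_lt with rfl | hx
  · linarith [hpos 0 le_rfl]
  have hψ : ContinuousOn (fun T => φ T * (2 * x - T) ^ 2) (Set.Icc 0 (2 * x)) :=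
    (hc.mono Set.Icc_subset_Ici_self).mul (by fun_prop)
  obtain ⟨z, hz, hmax⟩ := isCompact_Icc.exists_isMaxOn (Set.nonempty_Icc.2 (by positivity)) hψ
  have hxz : φ x * (2 * x - x) ^ 2 ≤ φ z * (2 * x - z) ^ 2 := hmax ⟨hx.le, by linarith⟩
  have hx2 : 0 < x ^ 2 := by positivity
  nlinarith [hxz.trans (mul_sq_le_of_isMaxOn hpos h hz hmax)]

end Boundedness

section LogConvexAntitone

open scoped MatrixOrder Matrix.Norms.L2Operator

variable {g : ℝ → ℝ} {n : ℕ} {A D : Matrix (Fin n) (Fin n) ℂ}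

theorem OperatorLogConvex.apply_le_mul_apply (hg : OperatorLogConvex g)
    (hc : ContinuousOn g (Set.Ioi 0)) (hpos : Set.MapsTo g (Set.Ioi 0) (Set.Ioi 0)) {l x : ℝ}
    (hl : 0 < l) (hx : l ≤ x) : g x ≤ 80 * g l := by
  have hshift : Set.MapsTo (l + ·) (Set.Ici 0) (Set.Ioi 0) := fun T hT =>
    add_pos_of_pos_of_nonneg hl hT
  have hle := le_mul_apply_zero (φ := fun T => g (l + T)) (x := x - l)
    (hc.comp (by fun_prop) hshift) (fun T hT => hpos (hshift hT))
    (fun T r t hT hr ht => by simpa using hg.one_sub_mul_le hpos hl hT hr ht) (sub_nonneg.2 hx)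
  simpa using hle

lemma OperatorLogConvex.exists_forall_ge_cfc_le (hg : OperatorLogConvex g)
    (hc : ContinuousOn g (Set.Ioi 0)) (hpos : Set.MapsTo g (Set.Ioi 0) (Set.Ioi 0))
    (hA : A.PosDef) : ∃ M : ℝ, ∀ X, A ≤ X → cfc g X ≤ M • 1 := by
  obtain ⟨l, hl, hlA⟩ := exists_pos_smul_one_le hA
  refine ⟨80 * g l, fun X hX => ?_⟩
  have hXsa : IsSelfAdjoint X := (posDef_of_posDef_of_le hA hX).isHermitian
  rw [← Algebra.algebraMap_eq_smul_one] at hlA ⊢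
  exact cfc_le_algebraMap g _ X
    (fun x hx => hg.apply_le_mul_apply hc hpos hl
      ((algebraMap_le_iff_le_spectrum hXsa).1 (hlA.trans hX) x hx))
    (continuousOn_real_spectrum g X) hXsa

lemma OperatorLogConvex.cfc_add_sub_cfc_le (hg : OperatorLogConvex g)
    (hpos : Set.MapsTo g (Set.Ioi 0) (Set.Ioi 0)) (hA : A.PosDef) (hD : 0 ≤ D) (k : ℕ) :
    cfc g (A + D) - cfc g A ≤ (2⁻¹ ^ k : ℝ) • (cfc g (A + (2 ^ k : ℝ) • D) - cfc g A) := by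
  induction k with
  | zero => simp
  | succ k ih =>
    have hend : (A + (2 ^ (k + 1) : ℝ) • D).PosDef :=
      hA.add_posSemidef (hD.posSemidef.smul (by positivity))
    have hmid : warith 2⁻¹ A (A + (2 ^ (k + 1) : ℝ) • D) = A + (2 ^ k : ℝ) • D := by
      rw [warith]; module
    have hconvex := hg.cfc_warith_le hpos hA hend one_pos
    rw [hmid] at hconvex
    calc cfc g (A + D) - cfc g A
        ≤ (2⁻¹ ^ k : ℝ) • (cfc g (A + (2 ^ k : ℝ) • D) - cfc g A) := ih
      _ ≤ (2⁻¹ ^ k : ℝ) • (((1 / 2 : ℝ) • cfc g A +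
            ((1 : ℝ)⁻¹ / 2) • cfc g (A + (2 ^ (k + 1) : ℝ) • D)) - cfc g A) := by gcongr
      _ = (2⁻¹ ^ (k + 1) : ℝ) • (cfc g (A + (2 ^ (k + 1) : ℝ) • D) - cfc g A) := by
          rw [pow_succ (2⁻¹ : ℝ)]; module

theorem OperatorLogConvex.operatorAntitone (hg : OperatorLogConvex g)
    (hc : ContinuousOn g (Set.Ioi 0)) (hpos : Set.MapsTo g (Set.Ioi 0) (Set.Ioi 0)) :
    OperatorAntitone g := by
  intro n A B hA _ hAB
  rw [mle_iff_le] at hAB ⊢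
  obtain ⟨M, hM⟩ := hg.exists_forall_ge_cfc_le hc hpos hA
  have hD : 0 ≤ B - A := sub_nonneg.2 hAB
  have hdecay (k : ℕ) : cfc g B - cfc g A ≤ (2⁻¹ ^ k : ℝ) • (M • 1 - cfc g A) := by
    have hAk : A ≤ A + (2 ^ k : ℝ) • (B - A) :=
      le_add_of_nonneg_right (smul_nonneg (by positivity) hD)
    calc cfc g B - cfc g A = cfc g (A + (B - A)) - cfc g A := by rw [add_sub_cancel]
      _ ≤ (2⁻¹ ^ k : ℝ) • (cfc g (A + (2 ^ k : ℝ) • (B - A)) - cfc g A) :=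
          hg.cfc_add_sub_cfc_le hpos hA hD k
      _ ≤ (2⁻¹ ^ k : ℝ) • (M • 1 - cfc g A) := by gcongr; exact hM _ hAk
  have hlim : Filter.Tendsto (fun k : ℕ => (2⁻¹ ^ k : ℝ) • (M • 1 - cfc g A)) Filter.atTop
      (nhds 0) := by
    simpa using (tendsto_pow_atTop_nhds_zero_of_lt_one (r := (2⁻¹ : ℝ)) (by norm_num)
      (by norm_num)).smul_const (M • 1 - cfc g A)
  exact sub_nonpos.1 (ge_of_tendsto' hlim hdecay)

end LogConvexAntitone

lemma operatorMonotone_of_operatorAntitone_comp_inv {f : ℝ → ℝ}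
    (hf : OperatorAntitone (fun x => f x⁻¹)) : OperatorMonotone f := by
  intro n A B hA hB hAB
  have hle := hf n B⁻¹ A⁻¹ hB.inv hA.inv (inv_le_inv_of_posDef_of_le hA hAB)
  rwa [← cfc_inv_eq_cfc_comp_inv f hA.inv, ← cfc_inv_eq_cfc_comp_inv f hB.inv, inv_inv_of_posDef hA,
    inv_inv_of_posDef hB] at hle

lemma operatorLogConvex_comp_inv {f : ℝ → ℝ}
    (hf : ∀ (n : ℕ) (A B : Matrix (Fin n) (Fin n) ℂ), A.PosDef → B.PosDef →
      MLE (cfc f (wharm 2⁻¹ A B)) (wgeom 2⁻¹ (cfc f A) (cfc f B))) :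
    OperatorLogConvex (fun x => f x⁻¹) := by
  intro n A B hA hB
  have hle := hf n A⁻¹ B⁻¹ hA.inv hB.inv
  have hM : (warith 2⁻¹ A B).PosDef := posDef_warith hA hB (by norm_num)
  rwa [wharm_eq_inv_warith_inv, inv_inv_of_posDef hA, inv_inv_of_posDef hB,
    cfc_inv_eq_cfc_comp_inv f hM, cfc_inv_eq_cfc_comp_inv f hA, cfc_inv_eq_cfc_comp_inv f hB] at hle

theorem stmt_4 (f : ℝ → ℝ) (hf : ContinuousOn f (Set.Ioi 0))
    (hf' : ∀ x ∈ Set.Ioi (0:ℝ), f x ∈ Set.Ioi (0:ℝ)) :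
    OperatorMonotone f ↔
      ∀ (n : ℕ) (A B : Matrix (Fin n) (Fin n) ℂ), A.PosDef → B.PosDef →
        MLE (cfc f (wharm 2⁻¹ A B)) (wgeom 2⁻¹ (cfc f A) (cfc f B)) := by
  have hpos : Set.MapsTo f (Set.Ioi 0) (Set.Ioi 0) := hf'
  constructor
  · intro hmono n A B hA hB
    exact hmono.cfc_wharm_le_wgeom hf hpos hA hB (by norm_num)
  · intro hmean
    have hanti := (operatorLogConvex_comp_inv hmean).operatorAntitone (continuousOn_comp_inv hf)
      fun _ hx => hpos (Set.mem_Ioi.2 (inv_pos.2 hx))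
    exact operatorMonotone_of_operatorAntitone_comp_inv hanti
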